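/- Let n ≥ 2, f ∈ C¹(ℝ), and let u be a W^{3,1}_loc(ℝⁿ) stable solution of div(∇u/√(1+|∇u|²)) = −f(u) in ℝⁿ. Define q_n := −1 if 2 ≤ n ≤ 10, and q_n := −n/2 + √(n−1) + 1 if n ≥ 11. If u satisfies the growth condition |∇u(x)| = o(|x|^{q_n}) as |x| → +∞, then u is constant. -/

import Mathlib

open MeasureTheory Metric Real Filter Asymptotics Bornology
open scoped RealInnerProductSpace Topology

noncomputable section

/-- Euclidean space `ℝⁿ`. -/
abbrev Euc (n : ℕ) := EuclideanSpace ℝ (Fin n)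

/-- `φ` is an admissible test function on `Ω`: smooth with compact support contained in `Ω`
(i.e. `φ ∈ C_c^∞(Ω)`). -/
def IsTestFun {n : ℕ} (Ω : Set (Euc n)) (φ : Euc n → ℝ) : Prop :=
  ContDiff ℝ (⊤ : ℕ∞) φ ∧ HasCompactSupport φ ∧ tsupport φ ⊆ Ω

/-- `u` is a weak solution of the mean curvature equation
`div(∇u/√(1+|∇u|²)) = -f(u)` in `Ω`:  `u ∈ W^{1,1}_loc(Ω)`, `f(u) ∈ L¹_loc(Ω)` and
`∫_Ω ∇u·∇φ/√(1+|∇u|²) = ∫_Ω f(u) φ` for every `φ ∈ C_c^∞(Ω)`. -/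
def IsWeakSolution {n : ℕ} (Ω : Set (Euc n)) (f : ℝ → ℝ) (u : Euc n → ℝ) : Prop :=
  LocallyIntegrableOn u Ω ∧
  LocallyIntegrableOn (fun x => ‖gradient u x‖) Ω ∧
  LocallyIntegrableOn (fun x => f (u x)) Ω ∧
  ∀ φ : Euc n → ℝ, IsTestFun Ω φ →
    ∫ x in Ω, ⟪gradient u x, gradient φ x⟫ / Real.sqrt (1 + ‖gradient u x‖ ^ 2)
      = ∫ x in Ω, f (u x) * φ x

/-- `u` is a stable solution of `div(∇u/√(1+|∇u|²)) = -f(u)` in `Ω`: it is a weak solution,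
`f'(u) ∈ L¹_loc(Ω)` and the second variation of the energy at `u` is nonnegative:
`∫_Ω f'(u) ξ² ≤ ∫_Ω (|∇ξ|²/√(1+|∇u|²) - (∇u·∇ξ)²/(1+|∇u|²)^{3/2})` for all `ξ ∈ C_c^∞(Ω)`. -/
def IsStableSolution {n : ℕ} (Ω : Set (Euc n)) (f : ℝ → ℝ) (u : Euc n → ℝ) : Prop :=
  IsWeakSolution Ω f u ∧
  LocallyIntegrableOn (fun x => deriv f (u x)) Ω ∧
  ∀ ξ : Euc n → ℝ, IsTestFun Ω ξ →
    ∫ x in Ω, deriv f (u x) * ξ x ^ 2 ≤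
      ∫ x in Ω, (‖gradient ξ x‖ ^ 2 / Real.sqrt (1 + ‖gradient u x‖ ^ 2)
        - ⟪gradient u x, gradient ξ x⟫ ^ 2 / (1 + ‖gradient u x‖ ^ 2) ^ ((3:ℝ)/2))

/-- A vector field `g` belongs to the Morrey space `M^p(Ω)`: there is `K > 0` with
`∫_{B_ρ(x₀) ∩ Ω} |g| ≤ K ρ^{n(1-1/p)}` for all `x₀ ∈ Ω` and `0 < ρ ≤ diam Ω`. -/
def MemMorrey {n : ℕ} (Ω : Set (Euc n)) (p : ℝ) (g : Euc n → Euc n) : Prop :=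
  ∃ K > (0:ℝ), ∀ x₀ ∈ Ω, ∀ ρ : ℝ, 0 < ρ → ρ ≤ Metric.diam Ω →
    ∫ x in Metric.ball x₀ ρ ∩ Ω, ‖g x‖ ≤ K * ρ ^ ((n : ℝ) * (1 - 1 / p))

section Helpers
variable {n : ℕ}

lemma contDiff_gradient {φ : Euc n → ℝ} {k m : WithTop ℕ∞} (h : ContDiff ℝ m φ) (hkm : k + 1 ≤ m) :
    ContDiff ℝ k (gradient φ) := by
  have : gradient φ = fun x => (InnerProductSpace.toDual ℝ (Euc n)).symm (fderiv ℝ φ x) := rfl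
  rw [this]
  exact (LinearIsometryEquiv.contDiff _).comp (h.fderiv_right hkm)

lemma inner_grad (φ : Euc n → ℝ) (x y : Euc n) : ⟪gradient φ x, y⟫ = fderiv ℝ φ x y :=
  inner_gradient_left

lemma inner_fderiv_grad {φ : Euc n → ℝ} (h : ContDiff ℝ 2 φ) (x y z : Euc n) :
    ⟪fderiv ℝ (gradient φ) x y, z⟫ = fderiv ℝ (fderiv ℝ φ) x y z := by
  have hd : DifferentiableAt ℝ (gradient φ) x :=
    ((contDiff_gradient (k := 1) h (by norm_num)).differentiable (by norm_num)) x
  have hd2 : DifferentiableAt ℝ (fderiv ℝ φ) x :=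
    ((h.fderiv_right (m := 1) (by norm_num)).differentiable (by norm_num)) x
  have h1 := (hd.hasFDerivAt.inner ℝ (hasFDerivAt_const z x))
  have h2 := (hd2.hasFDerivAt.clm_apply (hasFDerivAt_const z x))
  have h3 : (fun t => ⟪gradient φ t, z⟫) = fun t => fderiv ℝ φ t z := by
    funext t; exact inner_grad φ t z
  rw [h3] at h1
  have h4 := congrArg (fun L => L y) (h1.unique h2)
  simpa using h4

lemma hess_symm {φ : Euc n → ℝ} (h : ContDiff ℝ 2 φ) (x y z : Euc n) :
    ⟪fderiv ℝ (gradient φ) x y, z⟫ = ⟪fderiv ℝ (gradient φ) x z, y⟫ := by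
  rw [inner_fderiv_grad h, inner_fderiv_grad h]
  exact (h.contDiffAt (x := x)).isSymmSndFDerivAt (by simp) y z

lemma grad_radial {φ : Euc n → ℝ} (h : ContDiff ℝ 2 φ) (x : Euc n) :
    HasGradientAt (fun x => ⟪x, gradient φ x⟫)
      (gradient φ x + fderiv ℝ (gradient φ) x x) x := by
  have hd : DifferentiableAt ℝ (gradient φ) x :=
    ((contDiff_gradient (k := 1) h (by norm_num)).differentiable (by norm_num)) x
  rw [hasGradientAt_iff_hasFDerivAt]
  have h1 := (hasFDerivAt_id x).inner ℝ hd.hasFDerivAt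
  refine h1.congr_fderiv ?_
  ext y
  simp
  rw [hess_symm h x x y, real_inner_comm x, add_comm]

lemma integrable_of_zero {g : Euc n → ℝ} (hg : Continuous g) {K : Set (Euc n)} (hK : IsCompact K)
    (h : ∀ x, x ∉ K → g x = 0) : Integrable g :=
  hg.integrable_of_hasCompactSupport (HasCompactSupport.intro hK h)

lemma ibp {g : Euc n → ℝ} (hg : ContDiff ℝ 1 g) (hc : HasCompactSupport g) :
    ∫ x, fderiv ℝ g x x = -(n : ℝ) * ∫ x, g x := by
  have hcf : Continuous (fderiv ℝ g) := hg.continuous_fderiv (by norm_num)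
  have hgd : Differentiable ℝ g := hg.differentiable (by norm_num)
  let e : Fin n → Euc n := fun k => EuclideanSpace.single k (1:ℝ)
  have hz : ∀ x, x ∉ tsupport g → g x = 0 ∧ fderiv ℝ g x = 0 := fun x hx =>
    ⟨image_eq_zero_of_notMem_tsupport hx,
      image_eq_zero_of_notMem_tsupport (fun h => hx (tsupport_fderiv_subset ℝ h))⟩
  have hx : ∀ x : Euc n, fderiv ℝ g x x = ∑ k, x k * fderiv ℝ g x (e k) := by
    intro x
    have : x = ∑ k, x k • e k := by
      ext j
      simp [e, Finset.sum_apply, Pi.single_apply]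
    conv_lhs => rw [this]
    rw [map_sum]
    simp [← this]
  have hco : ∀ k : Fin n, Continuous fun x : Euc n => x k := fun k => by fun_prop
  have hfd : ∀ (k : Fin n) (x : Euc n), HasFDerivAt (fun x : Euc n => x k)
      (EuclideanSpace.proj k : Euc n →L[ℝ] ℝ) x := fun k x =>
    (EuclideanSpace.proj k : Euc n →L[ℝ] ℝ).hasFDerivAt
  have i1 : ∀ k : Fin n, Integrable (fun x : Euc n => x k * fderiv ℝ g x (e k)) := fun k =>
    integrable_of_zero (by fun_prop) hc (fun x hx => by simp [(hz x hx).2])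
  have i2 : ∀ k : Fin n, Integrable (fun x : Euc n => x k * g x) := fun k =>
    integrable_of_zero ((hco k).mul hg.continuous) hc (fun x hx => by simp [(hz x hx).1])
  have i3 : Integrable g := integrable_of_zero hg.continuous hc (fun x hx => (hz x hx).1)
  have key : ∀ k : Fin n, ∫ x : Euc n, x k * fderiv ℝ g x (e k) = - ∫ x, g x := by
    intro k
    have hone : ∀ x : Euc n, fderiv ℝ (fun x : Euc n => x k) x (e k) = 1 := by
      intro x; rw [(hfd k x).fderiv]; simp [e]
    rw [integral_mul_fderiv_eq_neg_fderiv_mul_of_integrable (f := fun x : Euc n => x k)]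
    · simp [hone]
    · simpa [hone] using i3
    · exact i1 k
    · exact i2 k
    · intro x _; exact (hfd k x).differentiableAt
    · intro x _; exact hgd x
  simp_rw [hx]
  rw [integral_finsetSum _ (fun k _ => i1 k)]
  simp [key]

lemma exists_approx {ξ : Euc n → ℝ} (hξ : ContDiff ℝ 1 ξ) (hc : HasCompactSupport ξ) :
    ∃ (K : Set (Euc n)) (C : ℝ) (s : ℕ → Euc n → ℝ), IsCompact K ∧
      (∀ k, IsTestFun Set.univ (s k)) ∧
      (∀ k x, x ∉ K → s k x = 0 ∧ gradient (s k) x = 0) ∧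
      (∀ k x, |s k x| ≤ C ∧ ‖gradient (s k) x‖ ≤ C) ∧
      (∀ x, Tendsto (fun k => s k x) atTop (𝓝 (ξ x))) ∧
      (∀ x, Tendsto (fun k => gradient (s k) x) atTop (𝓝 (gradient ξ x))) := by
  have hcf : Continuous (fderiv ℝ ξ) := hξ.continuous_fderiv (by norm_num)
  obtain ⟨C₁, hC₁⟩ := hc.exists_bound_of_continuous hξ.continuous
  obtain ⟨C₂, hC₂⟩ := (hc.fderiv ℝ).exists_bound_of_continuous hcf
  let b : ℕ → ContDiffBump (0 : Euc n) := fun k =>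
    ⟨1 / (2 * ((k:ℝ) + 1)), 1 / ((k:ℝ) + 1), by positivity, by
      apply one_div_lt_one_div_of_lt <;> [positivity; linarith [(Nat.cast_nonneg k : (0:ℝ) ≤ k)]]⟩
  have hb1 : ∀ k, (b k).rOut ≤ 1 := fun k => by
    show 1 / ((k:ℝ) + 1) ≤ 1
    rw [div_le_one (by positivity)]; linarith [(Nat.cast_nonneg k : (0:ℝ) ≤ k)]
  have hb0 : Tendsto (fun k => (b k).rOut) atTop (𝓝 0) := tendsto_one_div_add_atTop_nhds_zero_nat
  let s : ℕ → Euc n → ℝ := fun k =>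
    MeasureTheory.convolution ((b k).normed volume) ξ (ContinuousLinearMap.lsmul ℝ ℝ) volume
  have hL : (ContinuousLinearMap.lsmul ℝ ℝ : ℝ →L[ℝ] ℝ →L[ℝ] ℝ).precompR (Euc n)
      = ContinuousLinearMap.lsmul ℝ ℝ := by
    ext; simp
  have hder : ∀ k x, HasFDerivAt (s k) (MeasureTheory.convolution ((b k).normed volume)
      (fderiv ℝ ξ) (ContinuousLinearMap.lsmul ℝ ℝ) volume x) x := by
    intro k x
    have := hc.hasFDerivAt_convolution_right (ContinuousLinearMap.lsmul ℝ ℝ) (μ := volume)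
      (f := (b k).normed volume) ((b k).continuous_normed.locallyIntegrable) hξ x
    rw [hL] at this
    exact this
  have hgr : ∀ k x, gradient (s k) x = (InnerProductSpace.toDual ℝ (Euc n)).symm
      (MeasureTheory.convolution ((b k).normed volume)
      (fderiv ℝ ξ) (ContinuousLinearMap.lsmul ℝ ℝ) volume x) := by
    intro k x
    rw [gradient, (hder k x).fderiv]
  let K : Set (Euc n) := Metric.cthickening 1 (tsupport ξ)
  have hKc : IsCompact K := hc.cthickening
  have hsK : ∀ k, Function.support (s k) ⊆ K := by
    intro k
    refine (MeasureTheory.support_convolution_subset _).trans ?_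
    rintro _ ⟨y, hy, z, hz, rfl⟩
    have hy' : y ∈ ball (0 : Euc n) (b k).rOut := by
      rw [← (b k).support_normed_eq (μ := volume)]; exact hy
    refine Metric.mem_cthickening_of_dist_le _ z _ _ (subset_tsupport _ hz) ?_
    simp only [dist_add_self_left]
    rw [mem_ball_zero_iff] at hy'
    exact (hy'.le.trans (hb1 k))
  have hts : ∀ k, tsupport (s k) ⊆ K := fun k =>
    closure_minimal (hsK k) (Metric.isClosed_cthickening)
  refine ⟨K, max (3 * C₁) (3 * C₂), s, hKc, ?_, ?_, ?_, ?_, ?_⟩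
  · intro k
    refine ⟨?_, hKc.of_isClosed_subset (isClosed_tsupport _) (hts k), Set.subset_univ _⟩
    exact HasCompactSupport.contDiff_convolution_left (ContinuousLinearMap.lsmul ℝ ℝ)
      (b k).hasCompactSupport_normed (b k).contDiff_normed hξ.continuous.locallyIntegrable
  · intro k x hx
    refine ⟨image_eq_zero_of_notMem_tsupport (fun h => hx (hts k h)), ?_⟩
    have : fderiv ℝ (s k) x = 0 := image_eq_zero_of_notMem_tsupport
      (fun h => hx (hts k (tsupport_fderiv_subset ℝ h)))
    rw [gradient, this, map_zero]
  · intro k x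
    constructor
    · refine le_trans ?_ (le_max_left _ _)
      have := (b k).dist_normed_convolution_le (μ := volume) (g := ξ) (x₀ := x) (ε := 2 * C₁)
        hξ.continuous.aestronglyMeasurable (fun y _ => by
          rw [dist_eq_norm]
          exact (norm_sub_le _ _).trans (by linarith [hC₁ x, hC₁ y]))
      rw [dist_eq_norm] at this
      have h2 := norm_le_norm_add_norm_sub' (s k x) (ξ x)
      have h3 := hC₁ x
      rw [← Real.norm_eq_abs]
      have h4 : ‖s k x - ξ x‖ ≤ 2 * C₁ := this
      linarith
    · refine le_trans ?_ (le_max_right _ _)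
      rw [hgr, LinearIsometryEquiv.norm_map]
      have := (b k).dist_normed_convolution_le (μ := volume) (g := fderiv ℝ ξ) (x₀ := x)
        (ε := 2 * C₂)
        hcf.aestronglyMeasurable (fun y _ => by
          rw [dist_eq_norm]
          exact (norm_sub_le _ _).trans (by linarith [hC₂ x, hC₂ y]))
      rw [dist_eq_norm] at this
      have h2 := norm_le_norm_add_norm_sub' (MeasureTheory.convolution ((b k).normed volume)
        (fderiv ℝ ξ) (ContinuousLinearMap.lsmul ℝ ℝ) volume x) (fderiv ℝ ξ x)
      have h3 := hC₂ x
      linarith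
  · intro x
    exact ContDiffBump.convolution_tendsto_right_of_continuous hb0 hξ.continuous x
  · intro x
    simp_rw [hgr]
    exact ((LinearIsometryEquiv.continuous _).tendsto _).comp
      (ContDiffBump.convolution_tendsto_right_of_continuous hb0 hcf x)

lemma tendsto_int {Φ : Euc n × ℝ × Euc n → ℝ} (hΦ : Continuous Φ) (h0 : ∀ x, Φ (x, 0, 0) = 0)
    {ξ : Euc n → ℝ} {K : Set (Euc n)} {C : ℝ} {s : ℕ → Euc n → ℝ} (hK : IsCompact K)
    (hs : ∀ k, IsTestFun Set.univ (s k))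
    (hz : ∀ k x, x ∉ K → s k x = 0 ∧ gradient (s k) x = 0)
    (hC : ∀ k x, |s k x| ≤ C ∧ ‖gradient (s k) x‖ ≤ C)
    (h1 : ∀ x, Tendsto (fun k => s k x) atTop (𝓝 (ξ x)))
    (h2 : ∀ x, Tendsto (fun k => gradient (s k) x) atTop (𝓝 (gradient ξ x))) :
    Tendsto (fun k => ∫ x, Φ (x, s k x, gradient (s k) x)) atTop
      (𝓝 (∫ x, Φ (x, ξ x, gradient ξ x))) := by
  have hcomp : IsCompact (K ×ˢ (Metric.closedBall (0:ℝ) C ×ˢ Metric.closedBall (0 : Euc n) C)) :=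
    hK.prod ((isCompact_closedBall _ _).prod (isCompact_closedBall _ _))
  obtain ⟨B, hB⟩ := hcomp.exists_bound_of_continuousOn hΦ.continuousOn
  refine tendsto_integral_of_dominated_convergence (K.indicator fun _ => B) ?_ ?_ ?_ ?_
  · intro k
    have hsk := (hs k).1
    have hg := (contDiff_gradient (k := 0) hsk (by simp)).continuous
    exact (hΦ.comp (by fun_prop)).aestronglyMeasurable
  · rw [integrable_indicator_iff hK.measurableSet]
    exact integrableOn_const hK.measure_lt_top.ne
  · intro k
    filter_upwards with x
    by_cases hx : x ∈ K
    · rw [Set.indicator_of_mem hx]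
      refine hB _ ⟨hx, ?_, ?_⟩
      · simpa using (hC k x).1
      · simpa using (hC k x).2
    · rw [Set.indicator_of_notMem hx, (hz k x hx).1, (hz k x hx).2, h0]; simp
  · filter_upwards with x
    exact (hΦ.tendsto _).comp (tendsto_const_nhds.prodMk_nhds ((h1 x).prodMk_nhds (h2 x)))

lemma fd_eq {g : Euc n → ℝ} {x y : Euc n} {d : ℝ} (hg : DifferentiableAt ℝ g x)
    (h : HasDerivAt (fun t : ℝ => g (x + t • y)) d 0) : fderiv ℝ g x y = d :=
  HasLineDerivAt.unique (hg.hasFDerivAt.hasLineDerivAt y) h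

/-- the area element -/
def ww (P : Euc n → Euc n) (x : Euc n) : ℝ := Real.sqrt (1 + ‖P x‖ ^ 2)

lemma ww_pos (P : Euc n → Euc n) (x : Euc n) : 0 < ww P x := by
  unfold ww; positivity

lemma ww_sq (P : Euc n → Euc n) (x : Euc n) : ww P x ^ 2 = 1 + ‖P x‖ ^ 2 :=
  Real.sq_sqrt (by positivity)

lemma ww_contDiff {P : Euc n → Euc n} {k : WithTop ℕ∞} (h : ContDiff ℝ k P) :
    ContDiff ℝ k (ww P) := by
  unfold ww
  refine ContDiff.sqrt (contDiff_const.add (h.norm_sq ℝ)) (fun x => by positivity)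

lemma ww_rpow (P : Euc n → Euc n) (x : Euc n) :
    (1 + ‖P x‖ ^ 2) ^ ((3:ℝ)/2) = ww P x ^ 3 := by
  unfold ww
  rw [Real.sqrt_eq_rpow, ← Real.rpow_mul_natCast (by positivity)]
  norm_num

lemma line_P {P : Euc n → Euc n} (h : ContDiff ℝ 1 P) (x y : Euc n) :
    HasDerivAt (fun t : ℝ => P (x + t • y)) (fderiv ℝ P x y) 0 :=
  ((h.differentiable (by norm_num)) x).hasFDerivAt.hasLineDerivAt y

lemma line_R {g : Euc n → ℝ} (h : ContDiff ℝ 1 g) (x y : Euc n) :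
    HasDerivAt (fun t : ℝ => g (x + t • y)) (⟪gradient g x, y⟫) 0 := by
  rw [inner_grad]
  exact ((h.differentiable (by norm_num)) x).hasFDerivAt.hasLineDerivAt y

lemma line_ww {P : Euc n → Euc n} (h : ContDiff ℝ 1 P) (x y : Euc n) :
    HasDerivAt (fun t : ℝ => ww P (x + t • y)) (⟪P x, fderiv ℝ P x y⟫ / ww P x) 0 := by
  have h1 := ((line_P h x y).norm_sq.const_add 1).sqrt (by positivity)
  refine h1.congr_deriv ?_
  simp only [zero_smul, add_zero]
  change _ / (2 * ww P x) = _
  have := ww_pos P x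
  field_simp

lemma stab_C1 {f : ℝ → ℝ} {u : Euc n → ℝ} (hf : ContDiff ℝ 1 f) (hu : ContDiff ℝ 3 u)
    (hst : IsStableSolution (Set.univ : Set (Euc n)) f u) {ξ : Euc n → ℝ} (hξ : ContDiff ℝ 1 ξ)
    (hc : HasCompactSupport ξ) :
    ∫ x, deriv f (u x) * ξ x ^ 2 ≤
      ∫ x, (‖gradient ξ x‖ ^ 2 / ww (gradient u) x
        - ⟪gradient u x, gradient ξ x⟫ ^ 2 / ww (gradient u) x ^ 3) := by
  obtain ⟨K, C, s, hK, hs, hz, hC, h1, h2⟩ := exists_approx hξ hc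
  have hP : Continuous (gradient u) := (contDiff_gradient (k := 2) hu (by norm_num)).continuous
  have hw : Continuous (ww (gradient u)) :=
    (ww_contDiff (contDiff_gradient (k := 2) hu (by norm_num))).continuous
  have hf' : Continuous (deriv f) := hf.continuous_deriv (by norm_num)
  have huc := hu.continuous
  have t1 := tendsto_int (Φ := fun p => deriv f (u p.1) * p.2.1 ^ 2) (ξ := ξ)
    (by fun_prop) (by simp) hK hs hz hC h1 h2
  have t2 := tendsto_int (Φ := fun p => ‖p.2.2‖ ^ 2 / ww (gradient u) p.1
        - ⟪gradient u p.1, p.2.2⟫ ^ 2 / ww (gradient u) p.1 ^ 3) (ξ := ξ)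
    (by
      have hw' : Continuous fun p : Euc n × ℝ × Euc n => ww (gradient u) p.1 :=
        hw.comp continuous_fst
      have hP' : Continuous fun p : Euc n × ℝ × Euc n => gradient u p.1 :=
        hP.comp continuous_fst
      refine ((continuous_snd.comp continuous_snd).norm.pow 2 |>.div hw'
        (fun p => (ww_pos _ _).ne')).sub
        (((hP'.inner (continuous_snd.comp continuous_snd)).pow 2).div (hw'.pow 3)
        (fun p => (pow_pos (ww_pos _ _) 3).ne'))) (by simp) hK hs hz hC h1 h2
  refine le_of_tendsto_of_tendsto' t1 t2 (fun k => ?_)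
  have := hst.2.2 (s k) (hs k)
  simp only [Measure.restrict_univ, ww_rpow] at this
  exact this

lemma weak_C1 {f : ℝ → ℝ} {u : Euc n → ℝ} (hf : ContDiff ℝ 1 f) (hu : ContDiff ℝ 3 u)
    (hst : IsStableSolution (Set.univ : Set (Euc n)) f u) {ξ : Euc n → ℝ} (hξ : ContDiff ℝ 1 ξ)
    (hc : HasCompactSupport ξ) :
    ∫ x, ⟪gradient u x, gradient ξ x⟫ / ww (gradient u) x = ∫ x, f (u x) * ξ x := by
  obtain ⟨K, C, s, hK, hs, hz, hC, h1, h2⟩ := exists_approx hξ hc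
  have hP : Continuous (gradient u) := (contDiff_gradient (k := 2) hu (by norm_num)).continuous
  have hw : Continuous (ww (gradient u)) :=
    (ww_contDiff (contDiff_gradient (k := 2) hu (by norm_num))).continuous
  have hf' : Continuous f := hf.continuous
  have huc := hu.continuous
  have t1 := tendsto_int (Φ := fun p => f (u p.1) * p.2.1) (ξ := ξ)
    (by fun_prop) (by simp) hK hs hz hC h1 h2
  have t2 := tendsto_int (Φ := fun p => ⟪gradient u p.1, p.2.2⟫ / ww (gradient u) p.1) (ξ := ξ)
    (by
      have hw' : Continuous fun p : Euc n × ℝ × Euc n => ww (gradient u) p.1 :=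
        hw.comp continuous_fst
      have hP' : Continuous fun p : Euc n × ℝ × Euc n => gradient u p.1 :=
        hP.comp continuous_fst
      refine ((hP'.inner (continuous_snd.comp continuous_snd))).div hw'
        (fun p => (ww_pos _ _).ne')) (by simp) hK hs hz hC h1 h2
  refine tendsto_nhds_unique t2 (t1.congr (fun k => ?_))
  have := hst.1.2.2.2 (s k) (hs k)
  simp only [Measure.restrict_univ] at this
  exact this.symm

lemma grad_zero {φ : Euc n → ℝ} {x : Euc n} (hx : x ∉ tsupport φ) : gradient φ x = 0 := by
  have : fderiv ℝ φ x = 0 := image_eq_zero_of_notMem_tsupport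
      (fun h => hx (tsupport_fderiv_subset ℝ h))
  rw [gradient, this, map_zero]

lemma fderiv_grad_zero {φ : Euc n → ℝ} {x : Euc n} (hx : x ∉ tsupport φ) :
    fderiv ℝ (gradient φ) x = 0 := by
  have hsub : tsupport (gradient φ) ⊆ tsupport φ :=
    closure_minimal (fun y hy => by
      by_contra h
      exact hy (grad_zero h)) (isClosed_tsupport _)
  exact image_eq_zero_of_notMem_tsupport
      (fun h => hx (hsub (tsupport_fderiv_subset ℝ h)))

lemma int_comb (c : ℝ) {a3 a4 a2 a1 a5 a6 : Euc n → ℝ} (i3 : Integrable a3) (i4 : Integrable a4)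
    (i2 : Integrable a2) (i1 : Integrable a1) (i5 : Integrable a5) (i6 : Integrable a6) :
    ∫ x, (((a3 x + c * a4 x) - a2 x) + (a1 x - (a5 x + c * a6 x))) =
      (((∫ x, a3 x) + c * ∫ x, a4 x) - ∫ x, a2 x) +
        ((∫ x, a1 x) - ((∫ x, a5 x) + c * ∫ x, a6 x)) := by
  have j4 : Integrable (fun x => c * a4 x) := i4.const_mul c
  have j6 : Integrable (fun x => c * a6 x) := i6.const_mul c
  have k1 : Integrable (fun x => a3 x + c * a4 x) := i3.add j4
  have k2 : Integrable (fun x => a5 x + c * a6 x) := i5.add j6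
  have k3 : Integrable (fun x => a3 x + c * a4 x - a2 x) := k1.sub i2
  have k4 : Integrable (fun x => a1 x - (a5 x + c * a6 x)) := i1.sub k2
  rw [integral_add k3 k4, integral_sub k1 i2, integral_sub i1 k2, integral_add i3 j4,
    integral_add i5 j6, integral_const_mul, integral_const_mul]

set_option maxHeartbeats 1600000 in
lemma I1 {f : ℝ → ℝ} {u : Euc n → ℝ} (hf : ContDiff ℝ 1 f) (hu : ContDiff ℝ 3 u)
    (hst : IsStableSolution (Set.univ : Set (Euc n)) f u) {φ : Euc n → ℝ} (hφ : ContDiff ℝ 2 φ)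
    (hc : HasCompactSupport φ) :
    ∫ x, (deriv f (u x) * ⟪gradient u x, x⟫ * φ x
      + ⟪gradient u x, gradient φ x⟫ / ww (gradient u) x
      - ⟪fderiv ℝ (gradient u) x x, gradient φ x⟫ / ww (gradient u) x
      + ⟪gradient u x, gradient φ x⟫ * ⟪gradient u x, fderiv ℝ (gradient u) x x⟫
        / ww (gradient u) x ^ 3) = 0 := by
  set P := gradient u with hPdef
  set w := ww P with hwdef
  set Q := gradient φ with hQdef
  have hP2 : ContDiff ℝ 2 P := contDiff_gradient hu (by norm_num)
  have hP1 : ContDiff ℝ 1 P := hP2.of_le (by norm_num)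
  have hw1 : ContDiff ℝ 1 w := ww_contDiff hP1
  have hQ1 : ContDiff ℝ 1 Q := contDiff_gradient hφ (by norm_num)
  have hu1 : ContDiff ℝ 1 u := hu.of_le (by norm_num)
  have hφ1 : ContDiff ℝ 1 φ := hφ.of_le (by norm_num)
  have hwne : ∀ x, w x ≠ 0 := fun x => (ww_pos P x).ne'
  have cP := hP1.continuous
  have cw := hw1.continuous
  have cQ := hQ1.continuous
  have cφ := hφ1.continuous
  have cu := hu1.continuous
  have cf := hf.continuous
  have cf' : Continuous (deriv f) := hf.continuous_deriv (by norm_num)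
  have cZ : Continuous fun x => fderiv ℝ P x x :=
    (hP1.continuous_fderiv (by norm_num)).clm_apply continuous_id
  have cQZ : Continuous fun x => fderiv ℝ Q x x :=
    (hQ1.continuous_fderiv (by norm_num)).clm_apply continuous_id
  have z0 : ∀ x, x ∉ tsupport φ → φ x = 0 := fun x hx => image_eq_zero_of_notMem_tsupport hx
  have z1 : ∀ x, x ∉ tsupport φ → Q x = 0 := fun x hx => grad_zero hx
  have z2 : ∀ x, x ∉ tsupport φ → fderiv ℝ Q x = 0 := fun x hx => fderiv_grad_zero hx
  -- the test function
  let ψ : Euc n → ℝ := fun x => n * φ x + ⟪x, Q x⟫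
  have hψ : ContDiff ℝ 1 ψ := (contDiff_const.mul hφ1).add (contDiff_id.inner ℝ hQ1)
  have hψc : HasCompactSupport ψ :=
    HasCompactSupport.intro hc (fun x hx => by simp [ψ, z0 x hx, z1 x hx])
  have hψg : ∀ x, gradient ψ x = (n : ℝ) • Q x + (Q x + fderiv ℝ Q x x) := by
    intro x
    apply HasGradientAt.gradient
    rw [hasGradientAt_iff_hasFDerivAt]
    have h1 := (((hφ1.differentiable (by norm_num)) x).hasGradientAt.hasFDerivAt.const_mul
      (n:ℝ)).add (grad_radial hφ x).hasFDerivAt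
    refine h1.congr_fderiv ?_
    ext y
    simp only [_root_.add_apply, _root_.smul_apply,
      InnerProductSpace.toDual_apply_apply, inner_add_left, real_inner_smul_left, smul_eq_mul, Q]
  have eqW := weak_C1 hf hu hst hψ hψc
  -- integration by parts 1
  have eqA := ibp (g := fun x => f (u x) * φ x) ((hf.comp hu1).mul hφ1)
    (HasCompactSupport.intro hc (fun x hx => by simp [z0 x hx]))
  have dA : ∀ x, fderiv ℝ (fun x => f (u x) * φ x) x x =
      deriv f (u x) * ⟪P x, x⟫ * φ x + f (u x) * ⟪Q x, x⟫ := by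
    intro x
    refine fd_eq (((hf.comp hu1).mul hφ1).differentiable (by norm_num) x) ?_
    have hfd : HasDerivAt f (deriv f (u (x + (0:ℝ) • x))) (u (x + (0:ℝ) • x)) :=
      (hf.differentiable (by norm_num) _).hasDerivAt
    have := (hfd.comp (0:ℝ) (line_R hu1 x x)).mul (line_R hφ1 x x)
    refine this.congr_deriv ?_
    simp [P, Q]
  simp_rw [dA] at eqA
  -- integration by parts 2
  have hB : ContDiff ℝ 1 (fun x => ⟪P x, Q x⟫ / w x) := (hP1.inner ℝ hQ1).div hw1 hwne
  have eqB := ibp (g := fun x => ⟪P x, Q x⟫ / w x) hB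
    (HasCompactSupport.intro hc (fun x hx => by simp [z1 x hx]))
  have dB : ∀ x, fderiv ℝ (fun x => ⟪P x, Q x⟫ / w x) x x =
      ⟪fderiv ℝ P x x, Q x⟫ / w x + ⟪P x, fderiv ℝ Q x x⟫ / w x
      - ⟪P x, Q x⟫ * ⟪P x, fderiv ℝ P x x⟫ / w x ^ 3 := by
    intro x
    refine fd_eq (hB.differentiable (by norm_num) x) ?_
    have := ((line_P hP1 x x).inner ℝ (line_P hQ1 x x)).div (line_ww hP1 x x)
      (ww_pos P _).ne'
    refine this.congr_deriv ?_
    simp only [zero_smul, add_zero]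
    change (_ * w x - _ * (_ / w x)) / w x ^ 2 = _
    have := hwne x
    generalize ⟪P x, fderiv ℝ Q x x⟫ = A1
    generalize ⟪fderiv ℝ P x x, Q x⟫ = A2
    generalize ⟪P x, Q x⟫ = A3
    generalize ⟪P x, fderiv ℝ P x x⟫ = A4
    generalize w x = w0 at *
    field_simp
    ring
  simp_rw [dB] at eqB
  have i1 : Integrable (fun x => ⟪P x, gradient ψ x⟫ / w x) := by
    refine integrable_of_zero ?_ hc (fun x hx => ?_)
    · simp_rw [hψg]
      exact (cP.inner ((cQ.const_smul (n:ℝ)).add (cQ.add cQZ))).div cw hwne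
    · simp [hψg, z1 x hx, z2 x hx]
  have i2 : Integrable (fun x => f (u x) * ψ x) := by
    refine integrable_of_zero ?_ hc (fun x hx => ?_)
    · exact (cf.comp cu).mul hψ.continuous
    · simp [ψ, z0 x hx, z1 x hx]
  have i3 : Integrable (fun x => deriv f (u x) * ⟪P x, x⟫ * φ x + f (u x) * ⟪Q x, x⟫) := by
    refine integrable_of_zero ?_ hc (fun x hx => ?_)
    · exact (((cf'.comp cu).mul (cP.inner continuous_id)).mul cφ).add
        ((cf.comp cu).mul (cQ.inner continuous_id))
    · simp [z0 x hx, z1 x hx]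
  have i4 : Integrable (fun x => f (u x) * φ x) := by
    refine integrable_of_zero ((cf.comp cu).mul cφ) hc (fun x hx => by simp [z0 x hx])
  have i5 : Integrable (fun x => ⟪fderiv ℝ P x x, Q x⟫ / w x + ⟪P x, fderiv ℝ Q x x⟫ / w x
      - ⟪P x, Q x⟫ * ⟪P x, fderiv ℝ P x x⟫ / w x ^ 3) := by
    refine integrable_of_zero ?_ hc (fun x hx => by simp [z1 x hx, z2 x hx])
    exact (((cZ.inner cQ).div cw hwne).add ((cP.inner cQZ).div cw hwne)).sub
      (((cP.inner cQ).mul (cP.inner cZ)).div (cw.pow 3) (fun x => pow_ne_zero 3 (hwne x)))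
  have i6 : Integrable (fun x => ⟪P x, Q x⟫ / w x) :=
    integrable_of_zero hB.continuous hc (fun x hx => by simp [z1 x hx])
  have hpt : ∀ x, (deriv f (u x) * ⟪P x, x⟫ * φ x
      + ⟪P x, Q x⟫ / w x - ⟪fderiv ℝ P x x, Q x⟫ / w x
      + ⟪P x, Q x⟫ * ⟪P x, fderiv ℝ P x x⟫ / w x ^ 3) =
      (((deriv f (u x) * ⟪P x, x⟫ * φ x + f (u x) * ⟪Q x, x⟫) + n * (f (u x) * φ x))
      - f (u x) * ψ x) + (⟪P x, gradient ψ x⟫ / w x -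
      ((⟪fderiv ℝ P x x, Q x⟫ / w x + ⟪P x, fderiv ℝ Q x x⟫ / w x
      - ⟪P x, Q x⟫ * ⟪P x, fderiv ℝ P x x⟫ / w x ^ 3) + n * (⟪P x, Q x⟫ / w x))) := by
    intro x
    rw [hψg]
    simp only [ψ, inner_add_right, inner_smul_right, real_inner_comm x (Q x)]
    ring
  simp_rw [hpt]
  rw [int_comb _ i3 i4 i2 i1 i5 i6, eqA, eqB, eqW]
  ring

lemma int_comb2 (c : ℝ) {a1 a2 a3 a4 a5 : Euc n → ℝ} (i1 : Integrable a1) (i2 : Integrable a2)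
    (i3 : Integrable a3) (i4 : Integrable a4) (i5 : Integrable a5) :
    Integrable (fun x => (a1 x - a2 x) + a3 x - (a4 x + c * a5 x)) ∧
    ∫ x, ((a1 x - a2 x) + a3 x - (a4 x + c * a5 x)) =
      ((∫ x, a1 x) - ∫ x, a2 x) + (∫ x, a3 x) - ((∫ x, a4 x) + c * ∫ x, a5 x) := by
  have j5 : Integrable (fun x => c * a5 x) := i5.const_mul c
  have k1 : Integrable (fun x => a1 x - a2 x) := i1.sub i2
  have k2 : Integrable (fun x => a4 x + c * a5 x) := i4.add j5
  have k3 : Integrable (fun x => a1 x - a2 x + a3 x) := k1.add i3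
  refine ⟨k3.sub k2, ?_⟩
  rw [integral_sub k3 k2, integral_add k1 i3, integral_sub i1 i2, integral_add i4 j5,
    integral_const_mul]

/-- the energy density obtained after inserting the radial derivative in the second variation -/
def EE (u η : Euc n → ℝ) (x : Euc n) : ℝ :=
  ⟪x, gradient u x⟫ ^ 2 * (‖gradient η x‖ ^ 2 / ww (gradient u) x
    - ⟪gradient u x, gradient η x⟫ ^ 2 / ww (gradient u) x ^ 3)
  + (1 / ww (gradient u) x + 1 / ww (gradient u) x ^ 3) *
    (η x ^ 2 * ‖gradient u x‖ ^ 2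
      + 2 * ⟪x, gradient u x⟫ * η x * ⟪gradient u x, gradient η x⟫)
  - ‖gradient u x‖ ^ 2 / ww (gradient u) x * (2 * η x * ⟪x, gradient η x⟫ + n * η x ^ 2)

lemma EE_alg (P Z N x : Euc n) (F v e w m : ℝ) (hw : 0 < w) (hw2 : w ^ 2 = 1 + ‖P‖ ^ 2)
    (hv : v = ⟪x, P⟫) :
    v ^ 2 * (‖N‖ ^ 2 / w - ⟪P, N⟫ ^ 2 / w ^ 3)
    + (1 / w + 1 / w ^ 3) * (e ^ 2 * ‖P‖ ^ 2 + 2 * v * e * ⟪P, N⟫)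
    - ‖P‖ ^ 2 / w * (2 * e * ⟪x, N⟫ + m * e ^ 2) =
    ((‖v • N + e • (P + Z)‖ ^ 2 / w - ⟪P, v • N + e • (P + Z)⟫ ^ 2 / w ^ 3) - F * (v * e) ^ 2)
    + (F * ⟪P, x⟫ * (v * e ^ 2)
      + ⟪P, (e ^ 2) • (P + Z) + (2 * v * e) • N⟫ / w
      - ⟪Z, (e ^ 2) • (P + Z) + (2 * v * e) • N⟫ / w
      + ⟪P, (e ^ 2) • (P + Z) + (2 * v * e) • N⟫ * ⟪P, Z⟫ / w ^ 3)
    - (((1 / w + 1 / w ^ 3) * ⟪P, Z⟫ * e ^ 2 + ‖P‖ ^ 2 / w * (2 * e * ⟪N, x⟫))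
      + m * (‖P‖ ^ 2 / w * e ^ 2)) := by
  have h1 : ‖v • N + e • (P + Z)‖ ^ 2 = v ^ 2 * ‖N‖ ^ 2 + 2 * v * e * (⟪P, N⟫ + ⟪Z, N⟫)
      + e ^ 2 * (‖P‖ ^ 2 + 2 * ⟪P, Z⟫ + ‖Z‖ ^ 2) := by
    simp only [← real_inner_self_eq_norm_sq, inner_add_left, inner_add_right, real_inner_smul_left,
      real_inner_smul_right]
    rw [real_inner_comm P N, real_inner_comm Z N, real_inner_comm P Z]
    ring
  rw [h1, real_inner_comm x P, ← hv, real_inner_comm x N]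
  simp only [inner_add_right, real_inner_smul_right, real_inner_self_eq_norm_sq]
  rw [real_inner_comm P Z]
  have h2 : ‖P‖ ^ 2 = w ^ 2 - 1 := by linarith
  rw [h2]
  generalize ⟪P, N⟫ = A1
  generalize ⟪Z, N⟫ = A2
  generalize ⟪P, Z⟫ = A3
  generalize ⟪x, N⟫ = A4
  generalize ‖N‖ = A5
  generalize ‖Z‖ = A6
  field_simp
  ring

set_option maxHeartbeats 1600000 in
lemma energy {f : ℝ → ℝ} {u : Euc n → ℝ} (hf : ContDiff ℝ 1 f) (hu : ContDiff ℝ 3 u)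
    (hst : IsStableSolution (Set.univ : Set (Euc n)) f u) {η : Euc n → ℝ} (hη : ContDiff ℝ 2 η)
    (hc : HasCompactSupport η) :
    Integrable (EE u η) ∧ 0 ≤ ∫ x, EE u η x := by
  set P := gradient u with hPdef
  set w := ww P with hwdef
  set N := gradient η with hNdef
  have hP2 : ContDiff ℝ 2 P := contDiff_gradient hu (by norm_num)
  have hP1 : ContDiff ℝ 1 P := hP2.of_le (by norm_num)
  have hw1 : ContDiff ℝ 1 w := ww_contDiff hP1
  have hN1 : ContDiff ℝ 1 N := contDiff_gradient hη (by norm_num)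
  have hu1 : ContDiff ℝ 1 u := hu.of_le (by norm_num)
  have hu2 : ContDiff ℝ 2 u := hu.of_le (by norm_num)
  have hη1 : ContDiff ℝ 1 η := hη.of_le (by norm_num)
  have hwp : ∀ x, 0 < w x := fun x => ww_pos P x
  have hwne : ∀ x, w x ≠ 0 := fun x => (ww_pos P x).ne'
  have cP := hP1.continuous
  have cw := hw1.continuous
  have cN := hN1.continuous
  have cη := hη1.continuous
  have cu := hu1.continuous
  have cf' : Continuous (deriv f) := hf.continuous_deriv (by norm_num)
  have cZ : Continuous fun x => fderiv ℝ P x x :=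
    (hP1.continuous_fderiv (by norm_num)).clm_apply continuous_id
  have z0 : ∀ x, x ∉ tsupport η → η x = 0 := fun x hx => image_eq_zero_of_notMem_tsupport hx
  have z1 : ∀ x, x ∉ tsupport η → N x = 0 := fun x hx => grad_zero hx
  let v : Euc n → ℝ := fun x => ⟪x, P x⟫
  have hv : ContDiff ℝ 2 v := contDiff_id.inner ℝ hP2
  have hvg : ∀ x, HasGradientAt v (P x + fderiv ℝ P x x) x := fun x => grad_radial hu2 x
  have hηg : ∀ x, HasGradientAt η (N x) x := fun x =>
    (hη1.differentiable (by norm_num) x).hasGradientAt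
  have hξg : ∀ x, gradient (fun x => v x * η x) x = v x • N x + η x • (P x + fderiv ℝ P x x) := by
    intro x
    apply HasGradientAt.gradient
    rw [hasGradientAt_iff_hasFDerivAt]
    refine ((hvg x).hasFDerivAt.mul (hηg x).hasFDerivAt).congr_fderiv ?_
    ext y
    simp only [_root_.add_apply, _root_.smul_apply,
      InnerProductSpace.toDual_apply_apply, inner_add_left, real_inner_smul_left, smul_eq_mul]
  have hφg : ∀ x, gradient (fun x => v x * η x ^ 2) x =
      (η x ^ 2) • (P x + fderiv ℝ P x x) + (2 * v x * η x) • N x := by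
    intro x
    apply HasGradientAt.gradient
    rw [hasGradientAt_iff_hasFDerivAt]
    have h1 := (hvg x).hasFDerivAt.mul ((hηg x).hasFDerivAt.mul (hηg x).hasFDerivAt)
    have h2 : (fun x => v x * η x ^ 2) = v * (η * η) := by
      funext y; simp only [Pi.mul_apply]; ring
    rw [h2]
    refine h1.congr_fderiv ?_
    ext y
    simp only [_root_.add_apply, _root_.smul_apply, Pi.mul_apply,
      InnerProductSpace.toDual_apply_apply, inner_add_left, real_inner_smul_left, smul_eq_mul]
    ring
  have hξ : ContDiff ℝ 1 (fun x => v x * η x) := (hv.mul hη).of_le (by norm_num)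
  have hφ : ContDiff ℝ 2 (fun x => v x * η x ^ 2) := hv.mul (hη.pow 2)
  have S := stab_C1 hf hu hst hξ (HasCompactSupport.intro hc (fun x hx => by simp [z0 x hx]))
  have eq1 := I1 hf hu hst hφ (HasCompactSupport.intro hc (fun x hx => by simp [z0 x hx]))
  simp_rw [hξg] at S
  simp_rw [hφg] at eq1
  have hB : ContDiff ℝ 1 (fun x => ‖P x‖ ^ 2 / w x * η x ^ 2) :=
    ((hP1.norm_sq ℝ).div hw1 hwne).mul (hη1.pow 2)
  have eq2 := ibp hB (HasCompactSupport.intro hc (fun x hx => by simp [z0 x hx]))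
  have dB : ∀ x, fderiv ℝ (fun x => ‖P x‖ ^ 2 / w x * η x ^ 2) x x =
      (1 / w x + 1 / w x ^ 3) * ⟪P x, fderiv ℝ P x x⟫ * η x ^ 2
        + ‖P x‖ ^ 2 / w x * (2 * η x * ⟪N x, x⟫) := by
    intro x
    refine fd_eq (hB.differentiable (by norm_num) x) ?_
    have := ((line_P hP1 x x).norm_sq.div (line_ww hP1 x x)
      (ww_pos P _).ne').mul ((line_R hη1 x x).pow 2)
    refine this.congr_deriv ?_
    simp only [zero_smul, add_zero, Pi.div_apply, Pi.pow_apply]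
    change (_ * w x - _ * (_ / w x)) / w x ^ 2 * _ + _ / w x * (_ * _ * ⟪N x, x⟫) = _
    have h1 := hwne x
    have h2 : ‖P x‖ ^ 2 = w x ^ 2 - 1 := by rw [hwdef, ww_sq]; ring
    rw [h2]
    generalize ⟪P x, fderiv ℝ P x x⟫ = A1
    generalize ⟪N x, x⟫ = A2
    generalize w x = w0 at *
    field_simp
    norm_num
    ring
  simp_rw [dB] at eq2
  have hpt : ∀ x, EE u η x = _ := fun x => EE_alg (P x) (fderiv ℝ P x x) (N x) x
    (deriv f (u x)) (v x) (η x) (w x) n (hwp x) (ww_sq P x) rfl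
  have cv := hv.continuous
  have cPZ := cP.add cZ
  have j1 : Integrable (fun x => ‖v x • N x + η x • (P x + fderiv ℝ P x x)‖ ^ 2 / w x
      - ⟪P x, v x • N x + η x • (P x + fderiv ℝ P x x)⟫ ^ 2 / w x ^ 3) := by
    refine integrable_of_zero ?_ hc (fun x hx => by simp [z0 x hx, z1 x hx])
    have c1 := (cv.smul cN).add (cη.smul cPZ)
    exact ((c1.norm.pow 2).div cw hwne).sub (((cP.inner c1).pow 2).div (cw.pow 3)
      (fun x => pow_ne_zero 3 (hwne x)))
  have j2 : Integrable (fun x => deriv f (u x) * (v x * η x) ^ 2) := by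
    refine integrable_of_zero ?_ hc (fun x hx => by simp [z0 x hx, z1 x hx])
    exact (cf'.comp cu).mul ((cv.mul cη).pow 2)
  have j3 : Integrable (fun x => deriv f (u x) * ⟪P x, x⟫ * (v x * η x ^ 2)
      + ⟪P x, (η x ^ 2) • (P x + fderiv ℝ P x x) + (2 * v x * η x) • N x⟫ / w x
      - ⟪fderiv ℝ P x x, (η x ^ 2) • (P x + fderiv ℝ P x x) + (2 * v x * η x) • N x⟫ / w x
      + ⟪P x, (η x ^ 2) • (P x + fderiv ℝ P x x) + (2 * v x * η x) • N x⟫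
        * ⟪P x, fderiv ℝ P x x⟫ / w x ^ 3) := by
    refine integrable_of_zero ?_ hc (fun x hx => by simp [z0 x hx, z1 x hx])
    have c1 := ((cη.pow 2).smul cPZ).add (((continuous_const (y := (2:ℝ))).mul cv |>.mul cη).smul cN)
    exact (((((cf'.comp cu).mul (cP.inner continuous_id)).mul (cv.mul (cη.pow 2))).add
      ((cP.inner c1).div cw hwne)).sub ((cZ.inner c1).div cw hwne)).add
      (((cP.inner c1).mul (cP.inner cZ)).div (cw.pow 3) (fun x => pow_ne_zero 3 (hwne x)))
  have j4 : Integrable (fun x => (1 / w x + 1 / w x ^ 3) * ⟪P x, fderiv ℝ P x x⟫ * η x ^ 2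
        + ‖P x‖ ^ 2 / w x * (2 * η x * ⟪N x, x⟫)) := by
    refine integrable_of_zero ?_ hc (fun x hx => by simp [z0 x hx, z1 x hx])
    exact ((((continuous_const.div cw hwne).add (continuous_const.div (cw.pow 3)
      (fun x => pow_ne_zero 3 (hwne x)))).mul (cP.inner cZ)).mul (cη.pow 2)).add
      (((cP.norm.pow 2).div cw hwne).mul ((continuous_const.mul cη).mul (cN.inner continuous_id)))
  have j5 : Integrable (fun x => ‖P x‖ ^ 2 / w x * η x ^ 2) :=
    integrable_of_zero hB.continuous hc (fun x hx => by simp [z0 x hx, z1 x hx])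
  obtain ⟨k1, k2⟩ := int_comb2 (n : ℝ) j1 j2 j3 j4 j5
  have hE : EE u η = _ := funext hpt
  rw [hE]
  refine ⟨k1, ?_⟩
  rw [k2]
  have S' := S
  rw [eq2]
  rw [eq1]
  linarith

lemma Fneg {a y t m θ : ℝ} (ha : 0 ≤ a) (h1 : 2 * a ≤ m - 2) (h2 : a ^ 2 - 2 * a ≤ m - 2)
    (h3 : (a + 2) ^ 2 ≤ 4 * (m - 1)) (hy0 : 0 ≤ y) (hy1 : y ≤ 1) (ht0 : 0 ≤ t) (ht1 : t ≤ 1)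
    (hθ0 : 0 ≤ θ) (hθ1 : θ ≤ 1) :
    (a * θ) ^ 2 * y * (1 - y * (1 - t)) + (1 + t) * (1 - 2 * (a * θ) * y) - m + 2 * (a * θ)
      ≤ -((1 - θ) * (1 - t)) := by
  have hF1 : a ^ 2 * y + 2 - 4 * a * y - m + 2 * a ≤ 0 := by
    nlinarith [mul_nonneg (sub_nonneg.2 hy1) (sub_nonneg.2 h1), mul_nonneg hy0 (sub_nonneg.2 h2)]
  have hF0 : a ^ 2 * y * (1 - y) + 1 - 2 * a * y - m + 2 * a ≤ 0 := by
    nlinarith [sq_nonneg (a * y - (a - 2) / 2)]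
  have hFa : a ^ 2 * y * (1 - y * (1 - t)) + (1 + t) * (1 - 2 * a * y) - m + 2 * a ≤ 0 := by
    have e : a ^ 2 * y * (1 - y * (1 - t)) + (1 + t) * (1 - 2 * a * y) - m + 2 * a
      = t * (a ^ 2 * y + 2 - 4 * a * y - m + 2 * a)
        + (1 - t) * (a ^ 2 * y * (1 - y) + 1 - 2 * a * y - m + 2 * a) := by ring
    rw [e]
    have := mul_nonpos_of_nonneg_of_nonpos ht0 hF1
    have := mul_nonpos_of_nonneg_of_nonpos (sub_nonneg.2 ht1) hF0
    linarith
  have hq : 0 ≤ a ^ 2 * y * (1 - y * (1 - t)) := by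
    have : y * (1 - t) ≤ 1 := by nlinarith
    have : 0 ≤ 1 - y * (1 - t) := by linarith
    positivity
  have hm : 2 ≤ m := by linarith
  have e2 : (a * θ) ^ 2 * y * (1 - y * (1 - t)) + (1 + t) * (1 - 2 * (a * θ) * y) - m + 2 * (a * θ)
      = θ * (a ^ 2 * y * (1 - y * (1 - t)) + (1 + t) * (1 - 2 * a * y) - m + 2 * a)
        + (1 - θ) * (1 + t - m) - θ * (1 - θ) * (a ^ 2 * y * (1 - y * (1 - t))) := by ring
  rw [e2]
  have g1 := mul_nonpos_of_nonneg_of_nonpos hθ0 hFa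
  have g2 := mul_nonneg (mul_nonneg hθ0 (sub_nonneg.2 hθ1)) hq
  have g3 : (1 - θ) * (1 + t - m) ≤ (1 - θ) * (-(1 - t)) :=
    mul_le_mul_of_nonneg_left (by linarith) (sub_nonneg.2 hθ1)
  linarith

lemma inner_bound {a m r2 s v w h : ℝ} (ha : 0 ≤ a) (h1 : 2 * a ≤ m - 2)
    (h2 : a ^ 2 - 2 * a ≤ m - 2)
    (h3 : (a + 2) ^ 2 ≤ 4 * (m - 1)) (hr : 0 ≤ r2) (hs : 0 ≤ s) (hv : v ^ 2 ≤ r2 * s)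
    (hw : 0 < w) (hw2 : w ^ 2 = 1 + s) :
    v ^ 2 * ((a / (1 + r2) * h) ^ 2 * r2 / w - (a / (1 + r2) * h * v) ^ 2 / w ^ 3)
      + (1 / w + 1 / w ^ 3) * (h ^ 2 * s + 2 * v * h * (-(a / (1 + r2) * h * v)))
      - s / w * (2 * h * (-(a / (1 + r2) * h * r2)) + m * h ^ 2)
      ≤ -(h ^ 2 * s ^ 2 / (w ^ 3 * (1 + r2))) := by
  obtain ⟨y, hy0, hy1, hy⟩ : ∃ y : ℝ, 0 ≤ y ∧ y ≤ 1 ∧ v ^ 2 = y * (r2 * s) := by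
    rcases (mul_nonneg hr hs).eq_or_lt with h0 | h0
    · exact ⟨0, le_rfl, zero_le_one, by rw [← h0] at hv ⊢; nlinarith [sq_nonneg v]⟩
    · exact ⟨v ^ 2 / (r2 * s), by positivity, by rwa [div_le_one h0],
        by rw [div_mul_cancel₀ _ h0.ne']⟩
  have hs' : s = w ^ 2 - 1 := by linarith
  have hr1 : 0 < 1 + r2 := by linarith
  have ht1 : 1 / w ^ 2 ≤ 1 := by rw [div_le_one (by positivity)]; linarith
  have key := Fneg (t := 1 / w ^ 2) (θ := r2 / (1 + r2)) ha h1 h2 h3 hy0 hy1 (by positivity) ht1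
    (by positivity) (by rw [div_le_one hr1]; linarith)
  have e1 : v ^ 2 * ((a / (1 + r2) * h) ^ 2 * r2 / w - (a / (1 + r2) * h * v) ^ 2 / w ^ 3)
      + (1 / w + 1 / w ^ 3) * (h ^ 2 * s + 2 * v * h * (-(a / (1 + r2) * h * v)))
      - s / w * (2 * h * (-(a / (1 + r2) * h * r2)) + m * h ^ 2)
      = h ^ 2 / w * s * ((a * (r2 / (1 + r2))) ^ 2 * y * (1 - y * (1 - 1 / w ^ 2))
        + (1 + 1 / w ^ 2) * (1 - 2 * (a * (r2 / (1 + r2))) * y) - m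
        + 2 * (a * (r2 / (1 + r2)))) := by
    have : v ^ 2 * ((a / (1 + r2) * h) ^ 2 * r2 / w - (a / (1 + r2) * h * v) ^ 2 / w ^ 3)
      + (1 / w + 1 / w ^ 3) * (h ^ 2 * s + 2 * v * h * (-(a / (1 + r2) * h * v)))
      - s / w * (2 * h * (-(a / (1 + r2) * h * r2)) + m * h ^ 2)
      = v ^ 2 * ((a / (1 + r2) * h) ^ 2 * r2 / w - (a / (1 + r2) * h) ^ 2 * v ^ 2 / w ^ 3)
      + (1 / w + 1 / w ^ 3) * (h ^ 2 * s - 2 * h * (a / (1 + r2) * h * v ^ 2))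
      - s / w * (2 * h * (-(a / (1 + r2) * h * r2)) + m * h ^ 2) := by ring
    rw [this, hy, hs']
    field_simp
    ring
  have e2 : -(h ^ 2 * s ^ 2 / (w ^ 3 * (1 + r2))) =
      h ^ 2 / w * s * (-((1 - r2 / (1 + r2)) * (1 - 1 / w ^ 2))) := by
    rw [hs']
    field_simp
    ring
  rw [e1, e2]
  exact mul_le_mul_of_nonneg_left key (by positivity)

lemma outer_bound (u η : Euc n → ℝ) (x : Euc n) :
    EE u η x ≤ 5 * ‖gradient u x‖ ^ 2 * (η x ^ 2 + (‖x‖ * ‖gradient η x‖) ^ 2) := by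
  unfold EE
  have hw := ww_pos (gradient u) x
  have hw2 := ww_sq (gradient u) x
  have hw1 : 1 ≤ ww (gradient u) x := by nlinarith [sq_nonneg ‖gradient u x‖]
  generalize ww (gradient u) x = w at *
  have c1 := abs_real_inner_le_norm x (gradient u x)
  have c2 := abs_real_inner_le_norm (gradient u x) (gradient η x)
  have c3 := abs_real_inner_le_norm x (gradient η x)
  have n1 := norm_nonneg x
  have n2 := norm_nonneg (gradient u x)
  have n3 := norm_nonneg (gradient η x)
  generalize ⟪x, gradient u x⟫ = v at *
  generalize ⟪gradient u x, gradient η x⟫ = z at *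
  generalize ⟪x, gradient η x⟫ = k at *
  generalize ‖x‖ = r at *
  generalize ‖gradient u x‖ = p at *
  generalize ‖gradient η x‖ = N at *
  generalize η x = e at *
  have hv2 : v ^ 2 ≤ (r * p) ^ 2 := sq_le_sq' (by linarith [neg_abs_le v]) ((le_abs_self v).trans c1)
  have hi1 : 1 / w ≤ 1 := by rw [div_le_one hw]; exact hw1
  have hi3 : 1 / w ^ 3 ≤ 1 := by
    rw [div_le_one (by positivity)]; exact one_le_pow₀ hw1
  have am : 2 * |e| * (r * N) ≤ e ^ 2 + (r * N) ^ 2 := by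
    rw [← sq_abs e]; nlinarith [sq_nonneg (|e| - r * N)]
  have t1 : v ^ 2 * (N ^ 2 / w - z ^ 2 / w ^ 3) ≤ p ^ 2 * (r * N) ^ 2 := by
    have : N ^ 2 / w - z ^ 2 / w ^ 3 ≤ N ^ 2 := by
      have a1 : N ^ 2 / w ≤ N ^ 2 := div_le_self (by positivity) hw1
      have a2 : 0 ≤ z ^ 2 / w ^ 3 := by positivity
      linarith
    calc v ^ 2 * (N ^ 2 / w - z ^ 2 / w ^ 3) ≤ v ^ 2 * N ^ 2 :=
          mul_le_mul_of_nonneg_left this (sq_nonneg v)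
      _ ≤ (r * p) ^ 2 * N ^ 2 := mul_le_mul_of_nonneg_right hv2 (sq_nonneg N)
      _ = _ := by ring
  have t2 : (1 / w + 1 / w ^ 3) * (e ^ 2 * p ^ 2 + 2 * v * e * z) ≤
      2 * (p ^ 2 * (2 * e ^ 2 + (r * N) ^ 2)) := by
    have b1 : 2 * v * e * z ≤ p ^ 2 * (e ^ 2 + (r * N) ^ 2) := by
      calc 2 * v * e * z ≤ |2 * v * e * z| := le_abs_self _
        _ = 2 * |e| * (|v| * |z|) := by simp only [abs_mul, abs_two]; ring
        _ ≤ 2 * |e| * ((r * p) * (p * N)) := by gcongr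
        _ = p ^ 2 * (2 * |e| * (r * N)) := by ring
        _ ≤ _ := by gcongr
    have b2 : e ^ 2 * p ^ 2 + 2 * v * e * z ≤ p ^ 2 * (2 * e ^ 2 + (r * N) ^ 2) := by
      linarith [b1]
    calc (1 / w + 1 / w ^ 3) * (e ^ 2 * p ^ 2 + 2 * v * e * z)
        ≤ (1 / w + 1 / w ^ 3) * (p ^ 2 * (2 * e ^ 2 + (r * N) ^ 2)) :=
          mul_le_mul_of_nonneg_left b2 (by positivity)
      _ ≤ _ := mul_le_mul_of_nonneg_right (by linarith) (by positivity)
  have t3 : -(p ^ 2 / w * (2 * e * k + n * e ^ 2)) ≤ p ^ 2 * (e ^ 2 + (r * N) ^ 2) := by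
    have b1 : -(2 * e * k + n * e ^ 2) ≤ e ^ 2 + (r * N) ^ 2 := by
      have : -(2 * e * k) ≤ 2 * |e| * (r * N) := by
        calc -(2 * e * k) ≤ |2 * e * k| := neg_le_abs _
          _ = 2 * |e| * |k| := by simp only [abs_mul, abs_two]
          _ ≤ _ := by gcongr
      have : 0 ≤ (n:ℝ) * e ^ 2 := by positivity
      linarith
    have b2 : p ^ 2 / w ≤ p ^ 2 := div_le_self (by positivity) hw1
    calc -(p ^ 2 / w * (2 * e * k + n * e ^ 2)) = p ^ 2 / w * (-(2 * e * k + n * e ^ 2)) := by ring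
      _ ≤ p ^ 2 / w * (e ^ 2 + (r * N) ^ 2) := mul_le_mul_of_nonneg_left b1 (by positivity)
      _ ≤ _ := mul_le_mul_of_nonneg_right b2 (by positivity)
  nlinarith [mul_nonneg (sq_nonneg p) (sq_nonneg (r * N))]

/-- weight -/
def hh (a : ℝ) (x : Euc n) : ℝ := (1 + ‖x‖ ^ 2) ^ (-(a / 2))

lemma hh_pos (a : ℝ) (x : Euc n) : 0 < hh a x := by unfold hh; positivity

lemma hh_contDiff (a : ℝ) {k : WithTop ℕ∞} : ContDiff ℝ k (hh a : Euc n → ℝ) := by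
  unfold hh
  exact (contDiff_const.add (contDiff_id.norm_sq ℝ)).rpow_const_of_ne
    (fun x => (by positivity : (0:ℝ) < 1 + ‖x‖ ^ 2).ne')

lemma hh_grad (a : ℝ) (x : Euc n) :
    HasGradientAt (hh a) (-(a / (1 + ‖x‖ ^ 2) * hh a x) • x) x := by
  have hp : (0:ℝ) < 1 + ‖x‖ ^ 2 := by positivity
  rw [hasGradientAt_iff_hasFDerivAt]
  have h1 := ((hasFDerivAt_id x).norm_sq.const_add 1).rpow_const (p := -(a / 2)) (Or.inl hp.ne')
  refine h1.congr_fderiv ?_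
  ext y
  simp [hh]
  rw [Real.rpow_sub_one hp.ne']
  field_simp

lemma cutoff : ∃ M : ℝ, 0 ≤ M ∧ ∀ R : ℝ, 0 < R → ∃ ζ : Euc n → ℝ, ContDiff ℝ 2 ζ ∧
    HasCompactSupport ζ ∧ (∀ x, 0 ≤ ζ x ∧ ζ x ≤ 1) ∧
    (∀ x, ‖x‖ < R → ζ x = 1 ∧ gradient ζ x = 0) ∧
    (∀ x, 2 * R < ‖x‖ → ζ x = 0 ∧ gradient ζ x = 0) ∧
    ∀ x, ‖x‖ * ‖gradient ζ x‖ ≤ M := by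
  let chi : ContDiffBump (0 : Euc n) := ⟨1, 2, one_pos, one_lt_two⟩
  have hchi : ContDiff ℝ 2 chi := chi.contDiff
  have hg : Continuous (gradient chi) :=
    (contDiff_gradient (k := 0) hchi (by norm_num)).continuous
  obtain ⟨M, hM⟩ := (isCompact_closedBall (0 : Euc n) 2).exists_bound_of_continuousOn
    (f := fun y => ‖y‖ * ‖gradient chi y‖) (continuous_norm.mul hg.norm).continuousOn
  have hout : ∀ y : Euc n, 2 < ‖y‖ → chi y = 0 ∧ gradient chi y = 0 := by
    intro y hy
    refine ⟨chi.zero_of_le_dist (by simpa using hy.le), grad_zero ?_⟩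
    rw [chi.tsupport_eq]
    simpa [chi] using hy
  have hMb : ∀ y : Euc n, ‖y‖ * ‖gradient chi y‖ ≤ |M| := by
    intro y
    rcases le_or_gt ‖y‖ 2 with h | h
    · have := hM y (by simpa using h)
      exact (le_abs_self _).trans (this.trans (le_abs_self M))
    · rw [(hout y h).2]; simp
  refine ⟨|M|, abs_nonneg M, fun R hR => ⟨fun x => chi (R⁻¹ • x), ?_, ?_, ?_, ?_, ?_, ?_⟩⟩
  · exact hchi.comp (contDiff_const_smul R⁻¹)
  · exact chi.hasCompactSupport.comp_smul (inv_ne_zero hR.ne')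
  · exact fun x => ⟨chi.nonneg, chi.le_one⟩
  all_goals
    have hgr : ∀ x : Euc n, gradient (fun x => chi (R⁻¹ • x)) x
        = R⁻¹ • gradient chi (R⁻¹ • x) := by
      intro x
      apply HasGradientAt.gradient
      rw [hasGradientAt_iff_hasFDerivAt]
      have h1 := (hchi.differentiable (by norm_num) (R⁻¹ • x)).hasGradientAt.hasFDerivAt.comp x
        ((hasFDerivAt_id x).const_smul R⁻¹)
      refine h1.congr_fderiv ?_
      ext y
      simp [inner_smul_left, inner_smul_right]
    have hnm : ∀ x : Euc n, ‖R⁻¹ • x‖ = R⁻¹ * ‖x‖ := by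
      intro x; rw [norm_smul, Real.norm_of_nonneg (by positivity)]
  · intro x hx
    have hx1 : ‖R⁻¹ • x‖ < 1 := by
      rw [hnm, inv_mul_lt_iff₀ hR]; linarith
    refine ⟨chi.one_of_mem_closedBall (by simpa [chi] using hx1.le), ?_⟩
    rw [hgr]
    have : (chi : Euc n → ℝ) =ᶠ[𝓝 (R⁻¹ • x)] fun _ => (1:ℝ) :=
      chi.eventuallyEq_one_of_mem_ball (by simpa [chi] using hx1)
    have h2 : gradient chi (R⁻¹ • x) = 0 := by
      rw [gradient, this.fderiv_eq]; simp
    rw [h2, smul_zero]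
  · intro x hx
    have hx1 : 2 < ‖R⁻¹ • x‖ := by
      rw [hnm, lt_inv_mul_iff₀ hR]; linarith
    refine ⟨(hout _ hx1).1, ?_⟩
    rw [hgr, (hout _ hx1).2, smul_zero]
  · intro x
    rw [hgr, norm_smul, Real.norm_of_nonneg (by positivity)]
    have := hMb (R⁻¹ • x)
    rw [hnm] at this
    linarith

lemma grad_mul {h ζ : Euc n → ℝ} {p q x : Euc n} (hp : HasGradientAt h p x)
    (hq : HasGradientAt ζ q x) : HasGradientAt (fun y => h y * ζ y) (h x • q + ζ x • p) x := by
  rw [hasGradientAt_iff_hasFDerivAt] at *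
  refine (hp.mul hq).congr_fderiv ?_
  ext y
  simp [inner_add_left, inner_smul_left]

/-- the dissipation density -/
def DD (a : ℝ) (u : Euc n → ℝ) (x : Euc n) : ℝ :=
  hh a x ^ 2 * (‖gradient u x‖ ^ 2) ^ 2 / (ww (gradient u) x ^ 3 * (1 + ‖x‖ ^ 2))

lemma DD_nonneg (a : ℝ) (u : Euc n → ℝ) (x : Euc n) : 0 ≤ DD a u x := by
  have := ww_pos (gradient u) x
  unfold DD; positivity

lemma hh_sq_le {a : ℝ} (ha : 0 ≤ a) (x : Euc n) (hx : 0 < ‖x‖) :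
    hh a x ^ 2 ≤ ‖x‖ ^ (-2 * a) := by
  unfold hh
  rw [← Real.rpow_natCast, ← Real.rpow_mul (by positivity)]
  have e : ‖x‖ ^ (-2 * a) = (‖x‖ ^ 2) ^ (-(a / 2) * (2:ℕ)) := by
    rw [← Real.rpow_natCast ‖x‖ 2, ← Real.rpow_mul hx.le]
    congr 1; push_cast; ring
  rw [e]
  apply Real.rpow_le_rpow_of_nonpos (by positivity) (by linarith)
  push_cast; linarith

lemma pointwise {a q M R ε : ℝ} {u ζ : Euc n → ℝ} (ha : 0 ≤ a) (h1 : 2 * a ≤ (n:ℝ) - 2)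
    (h2 : a ^ 2 - 2 * a ≤ (n:ℝ) - 2) (h3 : (a + 2) ^ 2 ≤ 4 * ((n:ℝ) - 1))
    (hq : a = q + n / 2) (hR : 0 < R) (hM : 0 ≤ M)
    (hζ : ContDiff ℝ 2 ζ) (hζ1 : ∀ x, 0 ≤ ζ x ∧ ζ x ≤ 1)
    (hin : ∀ x, ‖x‖ < R → ζ x = 1 ∧ gradient ζ x = 0)
    (hout : ∀ x, 2 * R < ‖x‖ → ζ x = 0 ∧ gradient ζ x = 0)
    (hb : ∀ x, ‖x‖ * ‖gradient ζ x‖ ≤ M)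
    (hgr : ∀ x, R ≤ ‖x‖ → ‖gradient u x‖ ≤ ε * ‖x‖ ^ q) (x : Euc n) :
    EE u (fun y => hh a y * ζ y) x ≤
      - (ball (0 : Euc n) R).indicator (DD a u) x
      + (closedBall (0 : Euc n) (2 * R)).indicator
          (fun _ => 5 * (1 + (a + M) ^ 2) * ε ^ 2 * (R ^ n)⁻¹) x := by
  have hG := (grad_mul (hh_grad a x)
    (hζ.differentiable (by norm_num) x).hasGradientAt).gradient
  have hC : 0 ≤ 5 * (1 + (a + M) ^ 2) * ε ^ 2 * (R ^ n)⁻¹ := by positivity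
  rcases lt_or_ge ‖x‖ R with hx | hx
  · have hm : x ∈ ball (0 : Euc n) R := by simpa using hx
    have hm2 : x ∈ closedBall (0 : Euc n) (2 * R) := by
      simp only [mem_closedBall, dist_zero_right]; linarith
    rw [Set.indicator_of_mem hm, Set.indicator_of_mem hm2]
    obtain ⟨z1, z2⟩ := hin x hx
    rw [z1, z2, smul_zero, zero_add, one_smul] at hG
    have hww := ww_pos (gradient u) x
    have cs : ⟪x, gradient u x⟫ ^ 2 ≤ ‖x‖ ^ 2 * ‖gradient u x‖ ^ 2 := by
      rw [← mul_pow, ← sq_abs]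
      exact pow_le_pow_left₀ (abs_nonneg _) (abs_real_inner_le_norm _ _) 2
    have key := inner_bound (h := hh a x) ha h1 h2 h3 (sq_nonneg ‖x‖) (sq_nonneg ‖gradient u x‖) cs
      hww (ww_sq (gradient u) x)
    refine (le_of_eq ?_).trans (key.trans ?_)
    · unfold EE
      rw [hG, norm_smul, inner_smul_right, inner_smul_right,
        real_inner_self_eq_norm_sq, real_inner_comm x (gradient u x), mul_pow, Real.norm_eq_abs,
        sq_abs]
      simp only [z1, mul_one]
      ring
    · unfold DD
      linarith
  · have hm : x ∉ ball (0 : Euc n) R := by simpa using hx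
    rw [Set.indicator_of_notMem hm, neg_zero, zero_add]
    rcases lt_or_ge (2 * R) ‖x‖ with hx2 | hx2
    · obtain ⟨z1, z2⟩ := hout x hx2
      rw [z1, z2, smul_zero, zero_smul, zero_add] at hG
      have : EE u (fun y => hh a y * ζ y) x = 0 := by
        unfold EE
        rw [hG]
        simp [z1]
      rw [this]
      exact Set.indicator_nonneg (fun _ _ => hC) x
    · have hm2 : x ∈ closedBall (0 : Euc n) (2 * R) := by simpa using hx2
      rw [Set.indicator_of_mem hm2]
      have hx0 : 0 < ‖x‖ := hR.trans_le hx
      have hp := hh_pos a x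
      have hz := hζ1 x
      have hN : ‖x‖ * ‖gradient (fun y => hh a y * ζ y) x‖ ≤ (a + M) * hh a x := by
        rw [hG]
        have n1 : ‖hh a x • gradient ζ x + ζ x • (-(a / (1 + ‖x‖ ^ 2) * hh a x) • x)‖
            ≤ hh a x * ‖gradient ζ x‖ + a / (1 + ‖x‖ ^ 2) * hh a x * ‖x‖ := by
          refine (norm_add_le _ _).trans ?_
          rw [norm_smul, norm_smul, norm_smul, norm_neg, Real.norm_of_nonneg hp.le,
            Real.norm_of_nonneg hz.1, Real.norm_of_nonneg (by positivity)]
          have : ζ x * (a / (1 + ‖x‖ ^ 2) * hh a x * ‖x‖)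
              ≤ 1 * (a / (1 + ‖x‖ ^ 2) * hh a x * ‖x‖) :=
            mul_le_mul_of_nonneg_right hz.2 (by positivity)
          linarith
        have n2 : a * (‖x‖ ^ 2 / (1 + ‖x‖ ^ 2)) ≤ a * 1 :=
          mul_le_mul_of_nonneg_left (by rw [div_le_one (by positivity)]; linarith) ha
        calc _ ≤ ‖x‖ * (hh a x * ‖gradient ζ x‖ + a / (1 + ‖x‖ ^ 2) * hh a x * ‖x‖) :=
              mul_le_mul_of_nonneg_left n1 hx0.le
          _ = hh a x * (‖x‖ * ‖gradient ζ x‖) + (a * (‖x‖ ^ 2 / (1 + ‖x‖ ^ 2))) * hh a x := by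
              ring
          _ ≤ hh a x * M + (a * 1) * hh a x := by
              gcongr
              exact hb x
          _ = _ := by ring
      refine (outer_bound u _ x).trans ?_
      have hN2 : (‖x‖ * ‖gradient (fun y => hh a y * ζ y) x‖) ^ 2 ≤ (a + M) ^ 2 * hh a x ^ 2 := by
        rw [← mul_pow]
        exact pow_le_pow_left₀ (by positivity) hN 2
      have he2 : (hh a x * ζ x) ^ 2 ≤ hh a x ^ 2 := by
        refine pow_le_pow_left₀ (mul_nonneg hp.le hz.1) ?_ 2
        nlinarith [hz.2]
      have hs : ‖gradient u x‖ ^ 2 ≤ ε ^ 2 * ‖x‖ ^ (2 * q) := by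
        have := pow_le_pow_left₀ (norm_nonneg _) (hgr x hx) 2
        rw [mul_pow, ← Real.rpow_natCast (‖x‖ ^ q), ← Real.rpow_mul hx0.le] at this
        rwa [mul_comm 2 q]
      have hsh : ‖gradient u x‖ ^ 2 * hh a x ^ 2 ≤ ε ^ 2 * (R ^ n)⁻¹ := by
        calc _ ≤ (ε ^ 2 * ‖x‖ ^ (2 * q)) * ‖x‖ ^ (-2 * a) :=
              mul_le_mul hs (hh_sq_le ha x hx0) (by positivity) (by positivity)
          _ = ε ^ 2 * (‖x‖ ^ n)⁻¹ := by
              rw [mul_assoc, ← Real.rpow_add hx0, ← Real.rpow_natCast ‖x‖ n, ← Real.rpow_neg hx0.le]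
              congr 2
              rw [hq]; ring
          _ ≤ _ := by gcongr
      calc _ ≤ 5 * ‖gradient u x‖ ^ 2 * (hh a x ^ 2 + (a + M) ^ 2 * hh a x ^ 2) := by
            gcongr
        _ = 5 * (1 + (a + M) ^ 2) * (‖gradient u x‖ ^ 2 * hh a x ^ 2) := by ring
        _ ≤ 5 * (1 + (a + M) ^ 2) * (ε ^ 2 * (R ^ n)⁻¹) := by gcongr
        _ = _ := by ring

lemma DD_cont {u : Euc n → ℝ} (a : ℝ) (hu : ContDiff ℝ 3 u) : Continuous (DD a u) := by
  have hP : Continuous (gradient u) :=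
    (contDiff_gradient (k := 0) hu (by norm_num)).continuous
  have hw : Continuous (ww (gradient u)) := by
    unfold ww
    fun_prop
  have hh1 : Continuous (hh a : Euc n → ℝ) := (hh_contDiff a (k := 0)).continuous
  unfold DD
  refine Continuous.div (by fun_prop) (by fun_prop) fun x => ?_
  have := ww_pos (gradient u) x
  positivity

lemma main_aux {a q : ℝ} {f : ℝ → ℝ} {u : Euc n → ℝ} (ha : 0 ≤ a) (h1 : 2 * a ≤ (n:ℝ) - 2)
    (h2 : a ^ 2 - 2 * a ≤ (n:ℝ) - 2) (h3 : (a + 2) ^ 2 ≤ 4 * ((n:ℝ) - 1))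
    (hq : a = q + n / 2) (hf : ContDiff ℝ 1 f) (hu : ContDiff ℝ 3 u)
    (hst : IsStableSolution (Set.univ : Set (Euc n)) f u)
    (hg : (fun x : Euc n => ‖gradient u x‖) =o[cobounded (Euc n)] fun x : Euc n => ‖x‖ ^ q) :
    ∃ c₀ : ℝ, ∀ x : Euc n, u x = c₀ := by
  obtain ⟨M, hM, hcut⟩ := cutoff (n := n)
  have hDc := DD_cont a hu
  set V : ℝ := volume.real (ball (0 : Euc n) 1) with hV
  set C : ℝ := 5 * (1 + (a + M) ^ 2) * 2 ^ n * V with hCdef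
  have hC : 0 ≤ C := by
    have : 0 ≤ V := measureReal_nonneg
    positivity
  have main : ∀ ρ ε : ℝ, 0 < ε → ∫ x in ball (0 : Euc n) ρ, DD a u x ≤ C * ε ^ 2 := by
    intro ρ ε hε
    have h := hg.def hε
    rw [(hasBasis_cobounded_norm (E := Euc n)).eventually_iff] at h
    obtain ⟨R₀, -, hR₀⟩ := h
    set R := max (max R₀ 1) ρ with hRdef
    have hR1 : 1 ≤ R := (le_max_right _ _).trans (le_max_left _ _)
    have hR : 0 < R := by linarith
    have hgr : ∀ x : Euc n, R ≤ ‖x‖ → ‖gradient u x‖ ≤ ε * ‖x‖ ^ q := by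
      intro x hx
      have := hR₀ (show x ∈ {x : Euc n | R₀ ≤ ‖x‖} from
        ((le_max_left _ _).trans (le_max_left _ _)).trans hx)
      rwa [norm_norm, Real.norm_of_nonneg (by positivity)] at this
    obtain ⟨ζ, c1, c2, c3, c4, c5, c6⟩ := hcut R hR
    have pw := pointwise (ε := ε) (u := u) ha h1 h2 h3 hq hR hM c1 c3 c4 c5 c6 hgr
    obtain ⟨i1, i2⟩ := energy hf hu hst (η := fun y => hh a y * ζ y)
      ((hh_contDiff a).mul c1) c2.mul_left
    have I1 : IntegrableOn (DD a u) (ball (0 : Euc n) R) :=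
      (hDc.continuousOn.integrableOn_compact (isCompact_closedBall (0 : Euc n) R)).mono_set
        ball_subset_closedBall
    have I2 : IntegrableOn (fun _ : Euc n => 5 * (1 + (a + M) ^ 2) * ε ^ 2 * (R ^ n)⁻¹)
        (closedBall (0 : Euc n) (2 * R)) :=
      continuous_const.continuousOn.integrableOn_compact (isCompact_closedBall _ _)
    have I1' := (integrable_indicator_iff measurableSet_ball).2 I1
    have I2' := (integrable_indicator_iff measurableSet_closedBall).2 I2
    have J := integral_mono i1 (I1'.neg.add I2') pw
    have J2 : ∫ x, (-((ball (0 : Euc n) R).indicator (DD a u) x)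
        + (closedBall (0 : Euc n) (2 * R)).indicator
          (fun _ => 5 * (1 + (a + M) ^ 2) * ε ^ 2 * (R ^ n)⁻¹) x)
        = - (∫ x in ball (0 : Euc n) R, DD a u x) + C * ε ^ 2 := by
      have I3 : Integrable fun x => -((ball (0 : Euc n) R).indicator (DD a u) x) := I1'.neg
      rw [integral_add I3 I2', integral_indicator measurableSet_closedBall,
        setIntegral_const]
      rw [integral_neg, integral_indicator measurableSet_ball]
      congr 1
      rw [Measure.real, Measure.addHaar_closedBall _ _ (by positivity), ENNReal.toReal_mul,
        ENNReal.toReal_ofReal (by positivity), finrank_euclideanSpace_fin]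
      rw [← Measure.real, ← hV, hCdef, smul_eq_mul,
        mul_pow]
      field_simp
    have J3 := i2.trans (J.trans J2.le)
    have J4 : ∫ x in ball (0 : Euc n) ρ, DD a u x ≤ ∫ x in ball (0 : Euc n) R, DD a u x :=
      setIntegral_mono_set I1 (Eventually.of_forall fun x => DD_nonneg a u x)
        (ball_subset_ball (le_max_right _ _)).eventuallyLE
    linarith
  have zero : ∀ ρ : ℝ, ∫ x in ball (0 : Euc n) ρ, DD a u x = 0 := by
    intro ρ
    refine le_antisymm ?_ (integral_nonneg fun x => DD_nonneg a u x)
    have ht : Tendsto (fun ε : ℝ => C * ε ^ 2) (𝓝[>] 0) (𝓝 (C * 0 ^ 2)) :=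
      ((continuous_const.mul (continuous_pow 2)).tendsto 0).mono_left nhdsWithin_le_nhds
    have := ge_of_tendsto ht (eventually_mem_nhdsWithin.mono fun ε hε => main ρ ε hε)
    simpa using this
  have hD0 : ∀ x : Euc n, DD a u x = 0 := by
    intro x
    have I1 : IntegrableOn (DD a u) (ball (0 : Euc n) (‖x‖ + 1)) :=
      (hDc.continuousOn.integrableOn_compact (isCompact_closedBall (0 : Euc n) _)).mono_set
        ball_subset_closedBall
    have h0 := (setIntegral_eq_zero_iff_of_nonneg_ae
      (Eventually.of_forall fun x => DD_nonneg a u x) I1).1 (zero (‖x‖ + 1))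
    have := Measure.eqOn_open_of_ae_eq h0 isOpen_ball hDc.continuousOn continuousOn_const
    exact this (show x ∈ ball (0 : Euc n) (‖x‖ + 1) by simp)
  have hG0 : ∀ x : Euc n, gradient u x = 0 := by
    intro x
    by_contra hne
    have : 0 < ‖gradient u x‖ := norm_pos_iff.2 hne
    have hw := ww_pos (gradient u) x
    have hp := hh_pos a x
    have h0 := hD0 x
    have : 0 < DD a u x := by unfold DD; positivity
    linarith
  refine ⟨u 0, fun x => is_const_of_fderiv_eq_zero (𝕜 := ℝ) (hu.differentiable (by norm_num))
    (fun y => ?_) x 0⟩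
  have := hG0 y
  rw [gradient] at this
  simpa using this

end Helpers

/-- **Theorem (Liouville theorem for stable solutions).**
Let `n ≥ 2`, `f ∈ C¹(ℝ)` and let `u` be a `W^{3,1}_loc(ℝⁿ)` stable solution of
`div(∇u/√(1+|∇u|²)) = -f(u)` in `ℝⁿ`.  Put `q_n = -1` if `2 ≤ n ≤ 10` and
`q_n = -n/2 + √(n-1) + 1` if `n ≥ 11`.  If `|∇u(x)| = o(|x|^{q_n})` as `|x| → ∞`,
then `u` is constant. -/
theorem stmt_5 (n : ℕ) (hn : 2 ≤ n) (f : ℝ → ℝ) (u : Euc n → ℝ)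
    (hf : ContDiff ℝ 1 f)
    (hreg : ContDiff ℝ 3 u)
    (hstable : IsStableSolution (Set.univ : Set (Euc n)) f u)
    (hgrowth : (fun x : Euc n => ‖gradient u x‖) =o[cobounded (Euc n)]
      fun x : Euc n => ‖x‖ ^ (if n ≤ 10 then (-1 : ℝ)
        else -(n:ℝ)/2 + Real.sqrt ((n:ℝ) - 1) + 1)) :
    ∃ c₀ : ℝ, ∀ x : Euc n, u x = c₀ := by
  have hn' : (2:ℝ) ≤ n := by exact_mod_cast hn
  split_ifs at hgrowth with h10
  · have h10' : (n:ℝ) ≤ 10 := by exact_mod_cast h10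
    refine main_aux (a := ((n:ℝ) - 2) / 2) (q := -1) ?_ ?_ ?_ ?_ ?_ hf hreg hstable hgrowth
    · linarith
    · linarith
    · nlinarith
    · nlinarith
    · ring
  · have h10' : (11:ℝ) ≤ n := by
      have : 11 ≤ n := by omega
      exact_mod_cast this
    have hs2 : Real.sqrt ((n:ℝ) - 1) ^ 2 = (n:ℝ) - 1 := Real.sq_sqrt (by linarith)
    have hs3 : 3 ≤ Real.sqrt ((n:ℝ) - 1) := Real.le_sqrt_of_sq_le (by norm_num; linarith)
    refine main_aux (a := 1 + Real.sqrt ((n:ℝ) - 1))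
      (q := -(n:ℝ)/2 + Real.sqrt ((n:ℝ) - 1) + 1) ?_ ?_ ?_ ?_ ?_ hf hreg hstable hgrowth
    · linarith
    · nlinarith
    · nlinarith
    · nlinarith
    · ring
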